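/- Let α ∈ (0,1), λ ∈ ℝ with K := 1 − λ(1−α) ≠ 0, and set p := λα/K. Let x : [0,∞) → ℝ be continuously differentiable and u : [0,∞) → ℝ be differentiable. If (1/(1−α)) ∫_0^t x′(τ) · exp((α/(α−1))·(t−τ)) dτ = λ·x(t) + u(t) for all t ≥ 0, then x′(t) = p·x(t) + (α/K)·u(t) + ((1−α)/K)·u′(t) for all t ≥ 0. -/

import Mathlib

open MeasureTheory intervalIntegral Real Set Filter

/-!
The kernel of the Caputo–Fabrizio derivative is exponential, so the nonlocal operator is inverted by
one differentiation: `D = CF Δ^(α) x` satisfies `(1 - α) D' + α D = x'`. Substituting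
`D = λ x + u` turns this into a linear equation for `x'` with leading coefficient `K`.
-/

section CaputoFabrizio

variable {E : Type*} [NormedAddCommGroup E] [NormedSpace ℝ E]

/-- The Caputo–Fabrizio derivative of order `α` based at `a`, with normalization `M(α) = 1`. The
classical derivative in it is taken within `[a, ∞)`, so only the values of `x` there matter. -/
noncomputable def caputoFabrizioDeriv (α a : ℝ) (x : ℝ → E) (t : ℝ) : E :=
  (1 / (1 - α)) • ∫ τ in a..t, exp (α / (α - 1) * (t - τ)) • derivWithin x (Ici a) τ

variable [CompleteSpace E] {a t : ℝ}

theorem hasDerivWithinAt_integral_Ici {f : ℝ → E} (hf : ContinuousOn f (Ici a)) (ht : a ≤ t) :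
    HasDerivWithinAt (fun s => ∫ τ in a..s, f τ) (f t) (Ici a) t := by
  have htmem : t ∈ Icc a (t + 1) := ⟨ht, by linarith⟩
  have hIcc : ContinuousOn f (Icc a (t + 1)) := hf.mono Icc_subset_Ici_self
  have : Fact (t ∈ Icc a (t + 1)) := ⟨htmem⟩
  have hderiv : HasDerivWithinAt (fun s => ∫ τ in a..s, f τ) (f t) (Icc a (t + 1)) t :=
    integral_hasDerivWithinAt_right
      ((hf.mono Icc_subset_Ici_self).intervalIntegrable_of_Icc ht)
      (hIcc.stronglyMeasurableAtFilter_nhdsWithin measurableSet_Icc t) (hIcc t htmem)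
  refine hderiv.mono_of_mem_nhdsWithin ?_
  rw [← Ici_inter_Iic]
  exact inter_mem_nhdsWithin _ (Iic_mem_nhds (by linarith))

theorem hasDerivWithinAt_integral_exp_smul {f : ℝ → E} (hf : ContinuousOn f (Ici a))
    (c : ℝ) (ht : a ≤ t) :
    HasDerivWithinAt (fun s => ∫ τ in a..s, exp (c * (s - τ)) • f τ)
      (f t + c • ∫ τ in a..t, exp (c * (t - τ)) • f τ) (Ici a) t := by
  have hfactor (s : ℝ) : ∫ τ in a..s, exp (c * (s - τ)) • f τ =
      exp (c * s) • ∫ τ in a..s, exp (-(c * τ)) • f τ := by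
    rw [← intervalIntegral.integral_smul]
    simp only [smul_smul, ← exp_add, ← sub_eq_add_neg, ← mul_sub]
  have hexp : HasDerivAt (fun s => exp (c * s)) (exp (c * t) * c) t := by
    simpa only [mul_one] using ((hasDerivAt_id' t).const_mul c).exp
  have hint : HasDerivWithinAt (fun s => ∫ τ in a..s, exp (-(c * τ)) • f τ)
      (exp (-(c * t)) • f t) (Ici a) t :=
    hasDerivWithinAt_integral_Ici (by fun_prop) ht
  simp only [hfactor]
  convert hexp.hasDerivWithinAt.fun_smul hint using 1
  rw [smul_smul, smul_smul, ← exp_add, add_neg_cancel, exp_zero, one_smul, mul_comm c]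

theorem hasDerivWithinAt_caputoFabrizioDeriv {x : ℝ → E}
    (hx : ContinuousOn (derivWithin x (Ici a)) (Ici a)) (α : ℝ) (ht : a ≤ t) :
    HasDerivWithinAt (caputoFabrizioDeriv α a x)
      ((1 / (1 - α)) • (derivWithin x (Ici a) t - α • caputoFabrizioDeriv α a x t))
      (Ici a) t := by
  have hrate : α / (α - 1) = -α * (1 / (1 - α)) := by
    rw [mul_one_div, neg_div, ← div_neg, neg_sub]
  refine ((hasDerivWithinAt_integral_exp_smul hx (α / (α - 1)) ht).const_smul
    (1 / (1 - α))).congr_deriv ?_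
  simp only [caputoFabrizioDeriv, hrate]
  module

theorem hasDerivWithinAt_forcing_of_caputoFabrizioDeriv_eq {α lam : ℝ} {x u : ℝ → E}
    (hx : ContDiffOn ℝ 1 x (Ici a))
    (h : ∀ s, a ≤ s → caputoFabrizioDeriv α a x s = lam • x s + u s) (ht : a ≤ t) :
    HasDerivWithinAt u
      ((1 / (1 - α)) • (derivWithin x (Ici a) t - α • (lam • x t + u t)) -
        lam • derivWithin x (Ici a) t) (Ici a) t := by
  have hx' : HasDerivWithinAt x (derivWithin x (Ici a) t) (Ici a) t :=
    (hx.differentiableOn one_ne_zero t ht).hasDerivWithinAt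
  have hD := hasDerivWithinAt_caputoFabrizioDeriv
    (hx.continuousOn_derivWithin (uniqueDiffOn_Ici a) le_rfl) α ht
  rw [h t ht] at hD
  refine (hD.sub (hx'.const_smul lam)).congr_of_mem (fun s hs => ?_) ht
  simp only [Pi.sub_apply, Pi.smul_apply, h s hs, add_sub_cancel_left]

theorem cf_linear_reduces_to_ode_general {α lam K p : ℝ} (hα : α ≠ 1)
    (hK : K = 1 - lam * (1 - α)) (hK0 : K ≠ 0) (hp : p = lam * α / K) {x u : ℝ → E}
    (hx : ContDiffOn ℝ 1 x (Ici a))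
    (h : ∀ s, a ≤ s → caputoFabrizioDeriv α a x s = lam • x s + u s) (ht : a ≤ t) :
    derivWithin x (Ici a) t =
      p • x t + (α / K) • u t + ((1 - α) / K) • derivWithin u (Ici a) t := by
  have hu' := (hasDerivWithinAt_forcing_of_caputoFabrizioDeriv_eq hx h ht).derivWithin
    (uniqueDiffOn_Ici a t ht)
  have hode : K • derivWithin x (Ici a) t =
      (lam * α) • x t + α • u t + (1 - α) • derivWithin u (Ici a) t := by
    rw [hu', smul_sub (1 - α), smul_smul (1 - α), mul_one_div_cancel (sub_ne_zero.mpr hα.symm),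
      one_smul, hK]
    module
  calc derivWithin x (Ici a) t
      = K⁻¹ • ((lam * α) • x t + α • u t + (1 - α) • derivWithin u (Ici a) t) :=
        (eq_inv_smul_iff₀ hK0).mpr hode
    _ = p • x t + (α / K) • u t + ((1 - α) / K) • derivWithin u (Ici a) t := by
        rw [hp]
        module

end CaputoFabrizio

/-- Reduction of the linear Caputo–Fabrizio equation to a first-order ODE: if
`(CF Δ^(α) x)(t) = λ x(t) + u(t)` for all `t ≥ 0`, with `K = 1 - λ(1-α) ≠ 0` and
`p = λα/K`, then `x'(t) = p x(t) + (α/K) u(t) + ((1-α)/K) u'(t)` for all `t ≥ 0`. -/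
theorem cf_linear_reduces_to_ode (α lam : ℝ) (hα : α ∈ Set.Ioo (0 : ℝ) 1)
    (K : ℝ) (hK : K = 1 - lam * (1 - α)) (hK0 : K ≠ 0)
    (p : ℝ) (hp : p = lam * α / K)
    (x u : ℝ → ℝ)
    (hx : ContDiffOn ℝ 1 x (Set.Ici 0))
    (hu : DifferentiableOn ℝ u (Set.Ici 0))
    (h : ∀ t : ℝ, 0 ≤ t →
      (1 / (1 - α)) *
        (∫ τ in (0 : ℝ)..t, derivWithin x (Set.Ici 0) τ * Real.exp ((α / (α - 1)) * (t - τ)))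
      = lam * x t + u t) :
    ∀ t : ℝ, 0 ≤ t →
      derivWithin x (Set.Ici 0) t
        = p * x t + (α / K) * u t + ((1 - α) / K) * derivWithin u (Set.Ici 0) t :=
  fun _ => cf_linear_reduces_to_ode_general hα.2.ne hK hK0 hp hx fun s hs => by
    simpa only [caputoFabrizioDeriv, smul_eq_mul, mul_comm (exp _)] using h s hs
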